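/- arXiv:1803.00151 — 4 statements merged into one kernel-verified Lean document; each statement's English description precedes it below -/
import Mathlib

section
/- Let Q ⊆ ℝ^m be a nonempty closed convex set, f : ℝ^m → ℝ a convex function whose set of minimizers over Q, X* = {x ∈ Q : f(x) ≤ f(y) for all y ∈ Q}, is nonempty, and let f* denote the minimum value of f over Q. Let r > 0, μ > 0 and p ≥ 1, and assume that every x ∈ Q with dist(x, X*) ≤ r satisfies f(x) − f* ≥ μ·dist(x, X*)^p. Then for every real f̂ ≥ f* and every x ∈ Q with f(x) ≤ f̂ the following hold: if f̂ − f* ≤ μ·r^p then dist(x, X*) ≤ ((f̂ − f*)/μ)^{1/p}, and if f̂ − f* ≥ μ·r^p then dist(x, X*) ≤ (f̂ − f*)/(μ·r^{p−1}). -/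
/-!
The growth bound extends linearly beyond distance `r`. If `d = dist(x, X*) > r`, let `y` be a
nearest point of `X*` and `z` the point of the segment `[y, x]` at distance `r` from `y`. Then
`y` is also nearest to `z`, so `dist(z, X*) = r` and the growth hypothesis applies at `z`; convexity
of `f` on the segment turns it into `μ r^(p-1) d ≤ f x - f*` (`linear_growth_of_lt_infDist`).
Both bounds on `dist(x, X*)` follow by comparing `d` with `r`.
-/

/-- A convex function growing at rate `μ r ^ p` at distance exactly `r` from a set `S` on which it
takes the value `c` grows at least linearly, with slope `μ r ^ (p - 1)`, beyond distance `r`.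
Closedness of `S` provides a nearest point. -/
lemma linear_growth_of_lt_infDist {m : ℕ} {Q S : Set (EuclideanSpace ℝ (Fin m))}
    {f : EuclideanSpace ℝ (Fin m) → ℝ} (hf : ConvexOn ℝ Q f)
    (hSQ : S ⊆ Q) (hSclosed : IsClosed S) (hSne : S.Nonempty) {c r μ p : ℝ}
    (hc : ∀ y ∈ S, f y = c) (hr : 0 < r)
    (hgrowth : ∀ z ∈ Q, Metric.infDist z S = r → μ * r ^ p ≤ f z - c)
    {x : EuclideanSpace ℝ (Fin m)} (hx : x ∈ Q) (hd : r < Metric.infDist x S) :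
    μ * r ^ (p - 1) * Metric.infDist x S ≤ f x - c := by
  obtain ⟨y, hyS, hy⟩ := hSclosed.exists_infDist_eq_dist hSne x
  set d := Metric.infDist x S with hd_def
  have hd0 : 0 < d := hr.trans hd
  set t := r / d with ht
  have htd : t * d = r := by rw [ht]; field_simp
  have ht0 : 0 < t := div_pos hr hd0
  have ht1 : t < 1 := (div_lt_one hd0).2 hd
  have hyx : ‖y - x‖ = d := by rw [hy, dist_comm, dist_eq_norm]
  have hxy : ‖x - y‖ = d := by rw [hy, dist_eq_norm]
  set z := (1 - t) • y + t • x with hz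
  have hzy : dist z y = r := by
    have : z - y = t • (x - y) := by rw [hz]; module
    rw [dist_eq_norm, this, norm_smul, hxy, Real.norm_of_nonneg ht0.le, htd]
  have hxz : dist x z = d - r := by
    have : x - z = (1 - t) • (x - y) := by rw [hz]; module
    rw [dist_eq_norm, this, norm_smul, hxy, Real.norm_of_nonneg (by linarith), sub_mul, htd,
      one_mul]
  have hzQ : z ∈ Q := hf.1 (hSQ hyS) hx (by linarith) ht0.le (by ring)
  have hzr : Metric.infDist z S = r := by
    apply le_antisymm
    · exact hzy ▸ Metric.infDist_le_dist_of_mem hyS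
    · have : d ≤ Metric.infDist z S + dist x z := Metric.infDist_le_infDist_add_dist
      linarith
  have hconv : f z ≤ (1 - t) • f y + t • f x :=
    hf.2 (hSQ hyS) hx (by linarith) ht0.le (by ring)
  rw [hc y hyS, smul_eq_mul, smul_eq_mul] at hconv
  have hg := hgrowth z hzQ hzr
  have hmul : μ * r ^ p ≤ t * (f x - c) := by linarith
  rw [Real.rpow_sub_one hr.ne']
  have hdr : μ * (r ^ p / r) * d = μ * r ^ p / t := by rw [ht]; field_simp
  rw [hdr, div_le_iff₀ ht0]
  linarith


/-- If `f` has Hölderian growth with constant `μ` and exponent `p` on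
`{x ∈ Q : dist(x, X*) ≤ r}`, then for every `f̂ ≥ f*` and `x ∈ Q` with `f(x) ≤ f̂`:
`dist(x,X*) ≤ ((f̂−f*)/μ)^{1/p}` when `f̂ − f* ≤ μ r^p`, and
`dist(x,X*) ≤ (f̂−f*)/(μ r^{p−1})` when `f̂ − f* ≥ μ r^p`. -/
theorem local_growth_bounds_D {m : ℕ} (Q : Set (EuclideanSpace ℝ (Fin m)))
    (hQne : Q.Nonempty) (hQclosed : IsClosed Q) (hQconv : Convex ℝ Q)
    (f : EuclideanSpace ℝ (Fin m) → ℝ) (hf : ConvexOn ℝ Set.univ f)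
    (Xstar : Set (EuclideanSpace ℝ (Fin m)))
    (hXstar : Xstar = {x | x ∈ Q ∧ ∀ y ∈ Q, f x ≤ f y})
    (hXne : Xstar.Nonempty)
    (fstar : ℝ) (hfstar : IsLeast (f '' Q) fstar)
    (r μ p : ℝ) (hr : 0 < r) (hμ : 0 < μ) (hp : 1 ≤ p)
    (hgrowth : ∀ x ∈ Q, Metric.infDist x Xstar ≤ r →
      μ * Metric.infDist x Xstar ^ p ≤ f x - fstar) :
    ∀ fhat : ℝ, fstar ≤ fhat → ∀ x ∈ Q, f x ≤ fhat →
      (fhat - fstar ≤ μ * r ^ p →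
        Metric.infDist x Xstar ≤ ((fhat - fstar) / μ) ^ (1 / p)) ∧
      (μ * r ^ p ≤ fhat - fstar →
        Metric.infDist x Xstar ≤ (fhat - fstar) / (μ * r ^ (p - 1))) := by
  intro fhat hfhat x hx hfx
  have hval : ∀ y ∈ Xstar, f y = fstar := by
    intro y hy
    rw [hXstar] at hy
    obtain ⟨w, hwQ, hw⟩ := hfstar.1
    exact le_antisymm (hw ▸ hy.2 w hwQ) (hfstar.2 ⟨y, hy.1, rfl⟩)
  have hSQ : Xstar ⊆ Q := fun y hy => by rw [hXstar] at hy; exact hy.1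
  have hcont : Continuous f := by
    rw [← continuousOn_univ]
    exact hf.continuousOn isOpen_univ
  have hclosed : IsClosed Xstar := by
    have : Xstar = Q ∩ ⋂ y ∈ Q, {x | f x ≤ f y} := by
      rw [hXstar]; ext; simp
    rw [this]
    exact hQclosed.inter
      (isClosed_biInter fun y _ => isClosed_le hcont continuous_const)
  have hfar : r < Metric.infDist x Xstar →
      μ * r ^ (p - 1) * Metric.infDist x Xstar ≤ f x - fstar :=
    linear_growth_of_lt_infDist (hf.subset (Set.subset_univ Q) hQconv) hSQ hclosed hXne hval hr
      (fun z hz hzr => by simpa only [hzr] using hgrowth z hz hzr.le) hx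
  have hK : 0 < μ * r ^ (p - 1) := mul_pos hμ (Real.rpow_pos_of_pos hr _)
  have hKr : μ * r ^ (p - 1) * r = μ * r ^ p := by
    rw [Real.rpow_sub_one hr.ne']; field_simp
  have hd0 : 0 ≤ Metric.infDist x Xstar := Metric.infDist_nonneg
  refine ⟨fun h => ?_, fun h => ?_⟩
  · have hdr : Metric.infDist x Xstar ≤ r := by
      by_contra! hlt
      have h1 := hfar hlt
      have h2 := mul_lt_mul_of_pos_left hlt hK
      linarith
    have hg := hgrowth x hx hdr
    rw [one_div, Real.le_rpow_inv_iff_of_pos hd0 (div_nonneg (by linarith) hμ.le) (by linarith),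
      le_div_iff₀ hμ]
    linarith
  · rw [le_div_iff₀ hK]
    rcases le_or_gt (Metric.infDist x Xstar) r with hle | hlt
    · have := mul_le_mul_of_nonneg_left hle hK.le
      linarith
    · linarith [hfar hlt]
end

section
/- For all reals M > 0, μ > 0, ε > 0, every real d > 1, and every integer N̄ ≥ −1, (N̄ + 1) + 3·∑_{n=−1}^{N̄} ⌊( M·(5·2^n·ε/μ)^{1/d} / (2^n·ε) )²⌋ < (N̄ + 1) + 3·( 5^{1/d}·M / (μ^{1/d}·ε^{1−1/d}) )² · min{ 16^{1−1/d}/(4^{1−1/d} − 1), N̄ + 5 }. -/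
/-!
Put `a = 1 - 1/d ∈ (0, 1)`, `q = 4 ^ a ∈ (1, 4)` and `C = 5^{1/d} M / (μ^{1/d} ε^a)`. The argument
of the `n`-th floor is exactly `C² q⁻ⁿ` (`restart_term_eq`), so after dropping the floors it remains
to bound `∑_{n=-1}^N q⁻ⁿ` strictly by both entries of the minimum. Summing the geometric series gives
`(q² - q⁻ᴺ) / (q - 1) < q² / (q - 1)` with `q² = 16 ^ a`, while bounding the term `n = -1` by
`q < 4` and each of the `N + 1` remaining terms by `1` gives `N + 5`.
-/

theorem sum_Icc_neg_one_succ (f : ℤ → ℝ) (N : ℤ) (hN : -1 ≤ N) :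
    ∑ n ∈ Finset.Icc (-1 : ℤ) (N + 1), f n = ∑ n ∈ Finset.Icc (-1 : ℤ) N, f n + f (N + 1) := by
  have h : Finset.Icc (-1 : ℤ) (N + 1) = insert (N + 1) (Finset.Icc (-1 : ℤ) N) := by
    ext x
    simp only [Finset.mem_Icc, Finset.mem_insert]
    omega
  rw [h, Finset.sum_insert (by simp), add_comm]

theorem geom_sum_Icc_neg_one (q : ℝ) (hq : 1 < q) (N : ℤ) (hN : -1 ≤ N) :
    ∑ n ∈ Finset.Icc (-1 : ℤ) N, q ^ (-n) = (q ^ 2 - q ^ (-N)) / (q - 1) := by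
  have hq0 : q ≠ 0 := by positivity
  have hq1 : q - 1 ≠ 0 := by linarith
  induction N, hN using Int.le_induction with
  | base =>
    simp
    field_simp
  | succ N hN ih =>
    rw [sum_Icc_neg_one_succ _ N hN, ih]
    have h : q ^ (-N) = q ^ (-(N + 1)) * q := by
      rw [← zpow_add_one₀ hq0]
      congr 1
      ring
    rw [h]
    field_simp
    ring

theorem geom_sum_Icc_neg_one_lt (q : ℝ) (hq : 1 < q) (hq4 : q < 4) (N : ℤ) (hN : -1 ≤ N) :
    ∑ n ∈ Finset.Icc (-1 : ℤ) N, q ^ (-n) < (N : ℝ) + 5 := by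
  induction N, hN using Int.le_induction with
  | base =>
    simp
    linarith
  | succ N hN ih =>
    rw [sum_Icc_neg_one_succ _ N hN]
    have h : q ^ (-(N + 1)) ≤ 1 := zpow_le_one_of_nonpos₀ hq.le (by omega)
    push_cast
    linarith

/-- The exact power-law form of the quantity under the `n`-th floor: the real powers of `ε` and
`2 ^ n` in numerator and denominator combine to exponent `-(1 - 1/d)`. -/
theorem restart_term_eq (M μ ε d : ℝ) (hμ : 0 < μ) (hε : 0 < ε) (n : ℤ) :
    (M * (5 * (2 : ℝ) ^ n * ε / μ) ^ (1 / d) / ((2 : ℝ) ^ n * ε)) ^ 2 =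
      ((5 : ℝ) ^ (1 / d) * M / (μ ^ (1 / d) * ε ^ (1 - 1 / d))) ^ 2 *
        ((4 : ℝ) ^ (1 - 1 / d)) ^ (-n) := by
  have h2 : (0 : ℝ) < 2 ^ n := by positivity
  have hsplit : ∀ x : ℝ, 0 < x → x = x ^ (1 / d) * x ^ (1 - 1 / d) := fun x hx => by
    rw [← Real.rpow_add hx, add_sub_cancel, Real.rpow_one]
  have h4 : ((4 : ℝ) ^ (1 - 1 / d)) ^ (-n) = ((((2 : ℝ) ^ n) ^ (1 - 1 / d)) ^ 2)⁻¹ := by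
    rw [zpow_neg, ← Real.rpow_intCast, ← Real.rpow_mul (by norm_num), ← Real.rpow_intCast 2 n,
      ← Real.rpow_mul (by norm_num), ← Real.rpow_natCast, ← Real.rpow_mul (by norm_num),
      show (4 : ℝ) = (2 : ℝ) ^ (2 : ℝ) by norm_num, ← Real.rpow_mul (by norm_num)]
    congr 2
    push_cast
    ring
  have hdiv : (5 * (2 : ℝ) ^ n * ε / μ) ^ (1 / d) =
      5 ^ (1 / d) * ((2 : ℝ) ^ n) ^ (1 / d) * ε ^ (1 / d) / μ ^ (1 / d) := by
    rw [Real.div_rpow (by positivity) hμ.le, Real.mul_rpow (by positivity) hε.le,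
      Real.mul_rpow (by norm_num) h2.le]
  have hden : (2 : ℝ) ^ n * ε = (((2 : ℝ) ^ n) ^ (1 / d) * ((2 : ℝ) ^ n) ^ (1 - 1 / d)) *
      (ε ^ (1 / d) * ε ^ (1 - 1 / d)) := by
    rw [← hsplit _ h2, ← hsplit _ hε]
  rw [h4, hdiv, hden]
  have p1 := Real.rpow_pos_of_pos h2 (1 / d)
  have p2 := Real.rpow_pos_of_pos h2 (1 - 1 / d)
  have p3 := Real.rpow_pos_of_pos hε (1 / d)
  have p4 := Real.rpow_pos_of_pos hε (1 - 1 / d)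
  have p5 := Real.rpow_pos_of_pos hμ (1 / d)
  generalize ((2 : ℝ) ^ n) ^ (1 / d) = a1 at *
  generalize ((2 : ℝ) ^ n) ^ (1 - 1 / d) = a2 at *
  generalize ε ^ (1 / d) = a3 at *
  generalize ε ^ (1 - 1 / d) = a4 at *
  generalize μ ^ (1 / d) = a5 at *
  generalize (5 : ℝ) ^ (1 / d) = a6 at *
  field_simp

/-- Corollary 5.1, `d > 1` case:
`(N̄+1) + 3·∑_{n=−1}^{N̄} ⌊(M·(5·2ⁿε/μ)^{1/d}/(2ⁿε))²⌋
  < (N̄+1) + 3·(5^{1/d}M/(μ^{1/d}ε^{1−1/d}))²·min{16^{1−1/d}/(4^{1−1/d}−1), N̄+5}`. -/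
theorem restart_subgrad_bound_d_gt_one (M μ ε d : ℝ) (hM : 0 < M) (hμ : 0 < μ)
    (hε : 0 < ε) (hd : 1 < d) (N : ℤ) (hN : -1 ≤ N) :
    ((N : ℝ) + 1) + 3 * ∑ n ∈ Finset.Icc (-1 : ℤ) N,
        (⌊(M * (5 * (2 : ℝ) ^ n * ε / μ) ^ (1 / d) / ((2 : ℝ) ^ n * ε)) ^ 2⌋ : ℝ) <
      ((N : ℝ) + 1) + 3 * ((5 : ℝ) ^ (1 / d) * M / (μ ^ (1 / d) * ε ^ (1 - 1 / d))) ^ 2 *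
        min ((16 : ℝ) ^ (1 - 1 / d) / ((4 : ℝ) ^ (1 - 1 / d) - 1)) ((N : ℝ) + 5) := by
  have hd0 : 0 < 1 / d := by positivity
  have hd1 : 1 / d < 1 := by rwa [div_lt_one (by linarith)]
  have hq : 1 < (4 : ℝ) ^ (1 - 1 / d) := Real.one_lt_rpow (by norm_num) (by linarith)
  have hq4 : (4 : ℝ) ^ (1 - 1 / d) < 4 := by
    simpa using Real.rpow_lt_rpow_of_exponent_lt (x := (4 : ℝ)) (by norm_num)
      (show 1 - 1 / d < 1 by linarith)
  have h16 : (16 : ℝ) ^ (1 - 1 / d) = ((4 : ℝ) ^ (1 - 1 / d)) ^ 2 := by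
    rw [sq, ← Real.mul_rpow (by norm_num) (by norm_num)]
    norm_num
  have hC : 0 < ((5 : ℝ) ^ (1 / d) * M / (μ ^ (1 / d) * ε ^ (1 - 1 / d))) ^ 2 := by positivity
  have hfloor : ∑ n ∈ Finset.Icc (-1 : ℤ) N,
        (⌊(M * (5 * (2 : ℝ) ^ n * ε / μ) ^ (1 / d) / ((2 : ℝ) ^ n * ε)) ^ 2⌋ : ℝ) ≤
      ((5 : ℝ) ^ (1 / d) * M / (μ ^ (1 / d) * ε ^ (1 - 1 / d))) ^ 2 *
        ∑ n ∈ Finset.Icc (-1 : ℤ) N, ((4 : ℝ) ^ (1 - 1 / d)) ^ (-n) := by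
    rw [Finset.mul_sum]
    exact Finset.sum_le_sum fun n _ =>
      (Int.floor_le _).trans_eq (restart_term_eq M μ ε d hμ hε n)
  have hsum : ∑ n ∈ Finset.Icc (-1 : ℤ) N, ((4 : ℝ) ^ (1 - 1 / d)) ^ (-n) <
      min ((16 : ℝ) ^ (1 - 1 / d) / ((4 : ℝ) ^ (1 - 1 / d) - 1)) ((N : ℝ) + 5) := by
    refine lt_min ?_ (geom_sum_Icc_neg_one_lt _ hq hq4 N hN)
    rw [geom_sum_Icc_neg_one _ hq N hN, h16]
    have hpos : 0 < ((4 : ℝ) ^ (1 - 1 / d)) ^ (-N) := by positivity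
    exact div_lt_div_of_pos_right (by linarith) (by linarith)
  have hlt := mul_lt_mul_of_pos_left hsum hC
  rw [mul_assoc]
  linarith
end

section
/- For all reals L > 0, μ > 0, ε > 0, every real d > 2, and every integer N̄ ≥ −1, ∑_{n=−1}^{N̄} ⌊ 2·(5·2^n·ε/μ)^{1/d}·√(L/(2^n·ε)) ⌋ < ( 2·√L·(5/μ)^{1/d} / ε^{1/2−1/d} ) · min{ 4^{1/2−1/d}/(2^{1/2−1/d} − 1), N̄ + 3 }. -/
/-!
Put `a = 1/2 - 1/d ∈ (0, 1/2)` and `r = 2 ^ a ∈ (1, 2)`. Before taking the floor, the `n`-th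
summand equals `C * r ^ (-n)` with `C = 2 √L (5/μ)^(1/d) / ε^a` (`accel_term_eq`), so it suffices
to bound `∑_{n=-1}^{N} r ^ (-n)`. As a finite piece of a geometric series it is strictly below
`r ^ 2 / (r - 1)`; bounding every term with `n ≥ 0` by `1`, it is at most
`r + (N + 1) < N + 3` (`geom_sum_neg_one`).
-/

/-- Both bounds on the geometric sum: its closed form, cleared of the denominator `r - 1`, and the
termwise estimate. -/
lemma geom_sum_neg_one (r : ℝ) (hr : 1 < r) (N : ℤ) (hN : -1 ≤ N) :
    (∑ n ∈ Finset.Icc (-1 : ℤ) N, r ^ (-n)) * (r - 1) = r ^ 2 - r ^ (-N) ∧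
      ∑ n ∈ Finset.Icc (-1 : ℤ) N, r ^ (-n) ≤ r + N + 1 := by
  induction N, hN using Int.leInduction with
  | base => constructor <;> simp; ring
  | succ N hN ih =>
    obtain ⟨h1, h2⟩ := ih
    have hs : Finset.Icc (-1 : ℤ) (N + 1) = insert (N + 1) (Finset.Icc (-1 : ℤ) N) := by
      ext x; simp only [Finset.mem_Icc, Finset.mem_insert]; omega
    have hr0 : r ≠ 0 := by positivity
    have hstep : r ^ (-N) = r ^ (-(N + 1)) * r := by
      rw [← zpow_add_one₀ hr0]; congr 1; ring
    have hle : r ^ (-(N + 1)) ≤ 1 := zpow_le_one_of_nonpos₀ hr.le (by omega)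
    rw [hs, Finset.sum_insert (by simp)]
    constructor
    · rw [add_mul, h1, hstep]; ring
    · push_cast; linarith

lemma accel_term_eq (L μ ε d : ℝ) (hL : 0 < L) (hμ : 0 < μ) (hε : 0 < ε) (n : ℤ) :
    2 * (5 * (2 : ℝ) ^ n * ε / μ) ^ (1 / d) * Real.sqrt (L / ((2 : ℝ) ^ n * ε)) =
      2 * Real.sqrt L * (5 / μ) ^ (1 / d) / ε ^ (1 / 2 - 1 / d) *
        ((2 : ℝ) ^ (1 / 2 - 1 / d)) ^ (-n) := by
  have ht : (0 : ℝ) < (2 : ℝ) ^ n := by positivity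
  have hr : ((2 : ℝ) ^ (1 / 2 - 1 / d)) ^ (-n) = (((2 : ℝ) ^ n) ^ (1 / 2 - 1 / d))⁻¹ := by
    rw [zpow_neg, ← Real.rpow_intCast, ← Real.rpow_intCast, ← Real.rpow_mul (by norm_num),
      ← Real.rpow_mul (by norm_num), mul_comm]
  rw [hr]
  generalize (2 : ℝ) ^ n = t at ht
  have e1 : 5 * t * ε / μ = (5 / μ) * (t * ε) := by ring
  rw [e1, Real.mul_rpow (by positivity) (by positivity), Real.sqrt_div hL.le,
    Real.sqrt_eq_rpow (t * ε)]
  have e2 : (t * ε) ^ (1 / d) / (t * ε) ^ ((1 : ℝ) / 2) =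
      (ε ^ (1 / 2 - 1 / d))⁻¹ * (t ^ (1 / 2 - 1 / d))⁻¹ := by
    rw [← Real.rpow_sub (by positivity), ← mul_inv, ← Real.mul_rpow hε.le ht.le,
      ← Real.rpow_neg (by positivity), mul_comm t]
    congr 1; ring
  calc _ = 2 * √L * (5 / μ) ^ (1 / d) *
        ((t * ε) ^ (1 / d) / (t * ε) ^ ((1 : ℝ) / 2)) := by ring
    _ = _ := by rw [e2]; ring


/-- Corollary 5.2, `d > 2` case:
`∑_{n=−1}^{N̄} ⌊2·(5·2ⁿε/μ)^{1/d}·√(L/(2ⁿε))⌋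
  < (2·√L·(5/μ)^{1/d}/ε^{1/2−1/d})·min{4^{1/2−1/d}/(2^{1/2−1/d}−1), N̄+3}`. -/
theorem restart_accel_bound_d_gt_two (L μ ε d : ℝ) (hL : 0 < L) (hμ : 0 < μ)
    (hε : 0 < ε) (hd : 2 < d) (N : ℤ) (hN : -1 ≤ N) :
    ∑ n ∈ Finset.Icc (-1 : ℤ) N,
        (⌊2 * (5 * (2 : ℝ) ^ n * ε / μ) ^ (1 / d) *
          Real.sqrt (L / ((2 : ℝ) ^ n * ε))⌋ : ℝ) <
      2 * Real.sqrt L * (5 / μ) ^ (1 / d) / ε ^ (1 / 2 - 1 / d) *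
        min ((4 : ℝ) ^ (1 / 2 - 1 / d) / ((2 : ℝ) ^ (1 / 2 - 1 / d) - 1)) ((N : ℝ) + 3) := by
  have hd0 : (0 : ℝ) < d := by linarith
  have hinv : 1 / d < 1 / 2 := one_div_lt_one_div_of_lt (by norm_num) hd
  have hinv0 : 0 < 1 / d := by positivity
  have hfour : (4 : ℝ) ^ (1 / 2 - 1 / d) = ((2 : ℝ) ^ (1 / 2 - 1 / d)) ^ 2 := by
    rw [show (4 : ℝ) = 2 * 2 by norm_num, Real.mul_rpow (by norm_num) (by norm_num), sq]
  have hr1 : 1 < (2 : ℝ) ^ (1 / 2 - 1 / d) :=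
    Real.one_lt_rpow (by norm_num) (by linarith)
  have hr2 : (2 : ℝ) ^ (1 / 2 - 1 / d) < 2 := by
    calc (2 : ℝ) ^ (1 / 2 - 1 / d) < 2 ^ (1 : ℝ) :=
          Real.rpow_lt_rpow_of_exponent_lt (by norm_num) (by linarith)
      _ = 2 := Real.rpow_one 2
  have hC : 0 < 2 * Real.sqrt L * (5 / μ) ^ (1 / d) / ε ^ (1 / 2 - 1 / d) := by positivity
  calc _ ≤ ∑ n ∈ Finset.Icc (-1 : ℤ) N,
        2 * Real.sqrt L * (5 / μ) ^ (1 / d) / ε ^ (1 / 2 - 1 / d) *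
          ((2 : ℝ) ^ (1 / 2 - 1 / d)) ^ (-n) := by
        refine Finset.sum_le_sum fun n _ => ?_
        rw [← accel_term_eq L μ ε d hL hμ hε n]
        exact Int.floor_le _
    _ < _ := by
        rw [← Finset.mul_sum, hfour]
        refine mul_lt_mul_of_pos_left ?_ hC
        generalize (2 : ℝ) ^ (1 / 2 - 1 / d) = r at hr1 hr2
        obtain ⟨h1, h2⟩ := geom_sum_neg_one r hr1 N hN
        refine lt_min ?_ (by linarith)
        rw [lt_div_iff₀ (by linarith), h1]
        have : 0 < r ^ (-N) := by positivity
        linarith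
end

section
/- Let c > 0 and b be reals, let J be a natural number and i an integer with i ≥ 3, and let a : ℕ → ℝ be a sequence satisfying a_{j+1} ≤ a_j − c for every j ∈ {0, 1, …, J}, together with a_{J+1} < b + 2c ≤ a_J and a_0 < b + i·c. Let φ : ℝ → ℝ be nondecreasing and nonnegative. Then i − J ≥ 3 and ∑_{j=0}^{J} φ(a_j) ≤ ∑_{m=3}^{i} φ(b + m·c). -/
/-!
Iterating the decrease gives `a j ≤ a 0 - j * c < b + (i - j) * c` for `j ≤ J`. At `j = J`,
comparison with `b + 2 * c ≤ a J` gives `2 < i - J`, hence `3 ≤ i - J` by integrality. Thus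
`j ↦ i - j` embeds `{0, …, J}` into `{3, …, i}`; monotonicity of `φ` bounds `φ (a j)` by the
summand at `m = i - j`, and the summands outside the image are nonnegative.
-/

/-- Abstract content of Corollary 4.4: if `a_{j+1} ≤ a_j − c` for `j = 0, …, J`,
`a_{J+1} < b + 2c ≤ a_J` and `a_0 < b + i·c` with `i ≥ 3`, then `i − J ≥ 3` and
`∑_{j=0}^{J} φ(a_j) ≤ ∑_{m=3}^{i} φ(b + m·c)` for nondecreasing nonnegative `φ`. -/
theorem update_sum_bound (c b : ℝ) (hc : 0 < c) (J : ℕ) (i : ℤ) (hi : 3 ≤ i)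
    (a : ℕ → ℝ)
    (hdec : ∀ j ≤ J, a (j + 1) ≤ a j - c)
    (hlt : a (J + 1) < b + 2 * c) (hge : b + 2 * c ≤ a J)
    (ha0 : a 0 < b + i * c)
    (φ : ℝ → ℝ) (hφmono : Monotone φ) (hφnonneg : ∀ x, 0 ≤ φ x) :
    3 ≤ i - (J : ℤ) ∧
      ∑ j ∈ Finset.range (J + 1), φ (a j) ≤
        ∑ m ∈ Finset.Icc (3 : ℤ) i, φ (b + m * c) := by
  have hbound : ∀ j ≤ J, a j ≤ a 0 - j * c := by
    intro j
    induction j with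
    | zero => intro _; simp
    | succ k ih =>
      intro hk
      have h1 := ih (by omega)
      have h2 := hdec k (by omega)
      push_cast
      linarith
  have hiJ : 3 ≤ i - (J : ℤ) := by
    have h := hbound J le_rfl
    have hmul : (2 : ℝ) * c < ((i : ℝ) - J) * c := by linarith
    have hreal : (2 : ℝ) < (i : ℝ) - J := lt_of_mul_lt_mul_right hmul hc.le
    have hint : (2 : ℤ) < i - (J : ℤ) := by exact_mod_cast hreal
    omega
  refine ⟨hiJ, ?_⟩
  have hinj : Set.InjOn (fun j : ℕ => i - (j : ℤ)) (Finset.range (J + 1)) := by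
    intro x _ y _ hxy
    simp only at hxy
    omega
  calc ∑ j ∈ Finset.range (J + 1), φ (a j)
      ≤ ∑ j ∈ Finset.range (J + 1), φ (b + ((i - (j : ℤ) : ℤ) : ℝ) * c) := by
        refine Finset.sum_le_sum fun j hj => hφmono ?_
        have h := hbound j (by rw [Finset.mem_range] at hj; omega)
        push_cast
        linarith
    _ = ∑ m ∈ (Finset.range (J + 1)).image (fun j : ℕ => i - (j : ℤ)), φ (b + m * c) :=
        (Finset.sum_image (f := fun m : ℤ => φ (b + m * c)) hinj).symm
    _ ≤ ∑ m ∈ Finset.Icc (3 : ℤ) i, φ (b + m * c) := by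
        refine Finset.sum_le_sum_of_subset_of_nonneg ?_ fun m _ _ => hφnonneg _
        intro m hm
        obtain ⟨j, hj, rfl⟩ := Finset.mem_image.mp hm
        rw [Finset.mem_range] at hj
        rw [Finset.mem_Icc]
        omega
end
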